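/- Let α > -1 and β < 0 with α + β > -1. Then there exists no finite positive Borel measure μ on [0,∞) such that j_{α+β}(z) = ∫₀^∞ j_α(zx) dμ(x) for all z ∈ ℝ. -/

import Mathlib

open MeasureTheory Complex

/-- The normalized one-variable Bessel function `j_α(z) = ₀F₁(α+1; -z²/4)`. -/
noncomputable def jBessel (α z : ℂ) : ℂ :=
  ∑' k : ℕ, (-1) ^ k * Complex.Gamma (α + 1) /
      ((k.factorial : ℂ) * Complex.Gamma (α + k + 1)) * (z / 2) ^ (2 * k)

namespace BesselAux

/-- power series coefficients in `y = z²` -/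
noncomputable def d (a : ℝ) (k : ℕ) : ℝ :=
  (-1 / 4) ^ k / ((k.factorial : ℝ) * ∏ i ∈ Finset.range k, (a + 1 + i))

/-- `G a (z²) = j_a(z)` -/
noncomputable def G (a y : ℝ) : ℝ := ∑' k : ℕ, d a k * y ^ k

lemma prod_pos {a : ℝ} (ha : -1 < a) (k : ℕ) : 0 < ∏ i ∈ Finset.range k, (a + 1 + (i : ℝ)) :=
  Finset.prod_pos fun i _ => by
    have : (0 : ℝ) ≤ i := Nat.cast_nonneg i
    linarith

lemma d_zero (a : ℝ) : d a 0 = 1 := by simp [d]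

lemma d_succ {a : ℝ} (ha : -1 < a) (k : ℕ) :
    ((k : ℝ) + 1) * d a (k + 1) = -1 / (4 * (a + 1)) * d (a + 1) k := by
  have h1 := (prod_pos (a := a + 1) (by linarith) k).ne'
  have h2 : a + 1 ≠ 0 := by linarith
  have h3 : (k.factorial : ℝ) ≠ 0 := by positivity
  have h4 : (k : ℝ) + 1 ≠ 0 := by positivity
  have e : ∏ i ∈ Finset.range (k + 1), (a + 1 + (i : ℝ)) =
      (∏ i ∈ Finset.range k, (a + 1 + 1 + (i : ℝ))) * (a + 1) := by
    rw [Finset.prod_range_succ']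
    congr 1
    · refine Finset.prod_congr rfl fun i _ => ?_
      push_cast; ring
    · simp
  unfold d
  rw [e, Nat.factorial_succ, pow_succ]
  push_cast
  field_simp
  try ring

lemma d_step {a : ℝ} (ha : -1 < a) (k : ℕ) :
    d a (k + 1) = d a k * (-1 / (4 * ((k : ℝ) + 1) * (a + 1 + k))) := by
  have h1 := (prod_pos ha k).ne'
  have h2 : a + 1 + k ≠ 0 := by
    have : (0 : ℝ) ≤ k := Nat.cast_nonneg k
    linarith
  have h3 : (k.factorial : ℝ) ≠ 0 := by positivity
  have h4 : (k : ℝ) + 1 ≠ 0 := by positivity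
  unfold d
  rw [Finset.prod_range_succ, Nat.factorial_succ, pow_succ]
  push_cast
  field_simp
  try ring

lemma d_rel {a : ℝ} (ha : -1 < a) (k : ℕ) :
    d a k = d (a + 1) k * (1 + k / (a + 1)) := by
  have h2 : a + 1 ≠ 0 := by linarith
  induction k with
  | zero => simp [d]
  | succ k ih =>
    have h5 : (0 : ℝ) ≤ k := Nat.cast_nonneg k
    have h4 : (k : ℝ) + 1 ≠ 0 := by positivity
    have h6 : a + 1 + k ≠ 0 := by linarith
    have h7 : a + 1 + 1 + k ≠ 0 := by linarith
    rw [d_step ha, d_step (a := a + 1) (by linarith), ih]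
    push_cast
    field_simp
    ring

lemma d_bound {a : ℝ} (ha : -1 < a) (k : ℕ) :
    |d a k| ≤ (1 / (4 * (a + 1))) ^ k / k.factorial := by
  have h2 : 0 < a + 1 := by linarith
  induction k with
  | zero => simp [d]
  | succ k ih =>
    have h5 : (0 : ℝ) ≤ k := Nat.cast_nonneg k
    have h6 : 0 < a + 1 + k := by linarith
    have e1 : |(-1 / (4 * ((k : ℝ) + 1) * (a + 1 + k)))| = 1 / (4 * ((k : ℝ) + 1) * (a + 1 + k)) := by
      rw [abs_div, abs_neg, abs_one, abs_of_pos (by positivity)]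
    have e2 : 1 / (4 * ((k : ℝ) + 1) * (a + 1 + k)) ≤ 1 / (4 * ((k : ℝ) + 1) * (a + 1)) := by
      apply one_div_le_one_div_of_le (by positivity)
      apply mul_le_mul_of_nonneg_left _ (by positivity)
      linarith
    rw [d_step ha, abs_mul, e1]
    calc _ ≤ (1 / (4 * (a + 1))) ^ k / k.factorial * (1 / (4 * ((k : ℝ) + 1) * (a + 1))) :=
          mul_le_mul ih e2 (by positivity) (by positivity)
      _ = _ := by
        rw [Nat.factorial_succ, pow_succ]; push_cast
        have h3 : (k.factorial : ℝ) ≠ 0 := by positivity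
        field_simp

lemma summ_abs {a : ℝ} (ha : -1 < a) (R : ℝ) (hR : 0 ≤ R) :
    Summable fun k => |d a k| * R ^ k := by
  have h2 : 0 < a + 1 := by linarith
  refine Summable.of_nonneg_of_le (fun k => by positivity) (fun k => ?_)
    (Real.summable_pow_div_factorial (1 / (4 * (a + 1)) * R))
  calc |d a k| * R ^ k ≤ ((1 / (4 * (a + 1))) ^ k / k.factorial) * R ^ k :=
        mul_le_mul_of_nonneg_right (d_bound ha k) (by positivity)
    _ = _ := by rw [mul_pow]; ring

lemma summ {a : ℝ} (ha : -1 < a) (y : ℝ) : Summable fun k => d a k * y ^ k := by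
  apply Summable.of_norm
  have := summ_abs ha |y| (abs_nonneg _)
  simpa [abs_mul, abs_pow] using this

lemma G_hasDerivAt {a : ℝ} (ha : -1 < a) (y : ℝ) :
    HasDerivAt (G a) (-1 / (4 * (a + 1)) * G (a + 1) y) y := by
  have h2 : 0 < a + 1 := by linarith
  set R := |y| + 1
  have hR : 0 ≤ R := by positivity
  have key := hasDerivAt_tsum_of_isPreconnected (𝕜 := ℝ)
    (g := fun k (y : ℝ) => d a k * y ^ k) (g' := fun k y => d a k * (k * y ^ (k - 1)))
    (u := fun k => |d a k| * (k * R ^ (k - 1))) (t := Metric.ball 0 R) (y₀ := 0) (y := y)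
    ?_ Metric.isOpen_ball (convex_ball _ _).isPreconnected ?_ ?_ ?_ (summ ha 0) ?_
  · have : (∑' k : ℕ, d a k * ((k : ℝ) * y ^ (k - 1))) = -1 / (4 * (a + 1)) * G (a + 1) y := by
      have hs : Summable fun k : ℕ => d a (k + 1) * (((k + 1 : ℕ) : ℝ) * y ^ (k + 1 - 1)) := by
        refine ((summ (a := a + 1) (by linarith) y).mul_left (-1 / (4 * (a + 1)))).congr fun k => ?_
        rw [← mul_assoc, ← d_succ ha]; push_cast; ring
      rw [((summable_nat_add_iff (f := fun k : ℕ => d a k * ((k : ℝ) * y ^ (k - 1))) 1).1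
        hs).tsum_eq_zero_add]
      rw [G, ← tsum_mul_left]
      simp only [Nat.cast_zero, zero_mul, mul_zero, zero_add]
      refine tsum_congr fun k => ?_
      rw [← mul_assoc (-1 / (4 * (a + 1))), ← d_succ ha]; push_cast; ring
    rw [this] at key
    exact key
  · rw [← summable_nat_add_iff 1]
    refine ((summ_abs (a := a + 1) (by linarith) R hR).mul_left (1 / (4 * (a + 1)))).congr fun k => ?_
    have := d_succ ha k
    have h3 := congrArg abs this
    rw [abs_mul, abs_mul, abs_of_pos (by positivity : (0:ℝ) < (k : ℝ) + 1), abs_div, abs_neg, abs_one,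
      abs_of_pos (by positivity : 0 < 4 * (a + 1))] at h3
    rw [← mul_assoc, ← h3]; push_cast; ring
  · intro n z _
    exact (hasDerivAt_pow n z).const_mul _
  · intro n z hz
    rw [Metric.mem_ball, dist_zero_right, Real.norm_eq_abs] at hz
    rw [Real.norm_eq_abs, abs_mul, abs_mul, abs_pow, Nat.abs_cast]
    gcongr
  · simp only [Metric.mem_ball, dist_self]; positivity
  · simp [Metric.mem_ball, R]

lemma G_rel {a : ℝ} (ha : -1 < a) (y : ℝ) :
    G a y = G (a + 1) y - y / (4 * (a + 1) * (a + 2)) * G (a + 2) y := by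
  have h2 : 0 < a + 1 := by linarith
  have h3 : 0 < a + 2 := by linarith
  have s0 := summ ha y
  have s1 := summ (a := a + 1) (by linarith) y
  have s2 := summ (a := a + 2) (by linarith) y
  unfold G
  rw [s0.tsum_eq_zero_add, s1.tsum_eq_zero_add, ← tsum_mul_left, add_sub_assoc,
    ← Summable.tsum_sub ((summable_nat_add_iff 1).2 s1) (s2.mul_left _)]
  simp only [d_zero]
  congr 1
  refine tsum_congr fun k => ?_
  have e1 := d_rel ha (k + 1)
  have e2 := d_succ (a := a + 1) (by linarith) k
  rw [show a + 1 + 1 = a + 2 by ring] at e2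
  have e3 : d (a + 2) k = - (4 * (a + 2)) * (((k : ℝ) + 1) * d (a + 1) (k + 1)) := by
    rw [e2]; field_simp
  rw [e1, e3, pow_succ]
  push_cast
  field_simp
  ring

lemma G_zero (a : ℝ) : G a 0 = 1 := by
  unfold G
  rw [tsum_eq_single 0]
  · simp [d]
  · intro k hk; simp [hk]

lemma jBessel_eq {a : ℝ} (ha : -1 < a) (z : ℝ) : jBessel (a : ℂ) (z : ℂ) = ((G a (z ^ 2) : ℝ) : ℂ) := by
  unfold jBessel G
  rw [Complex.ofReal_tsum]
  refine tsum_congr fun k => ?_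
  have hg : Real.Gamma (a + k + 1) = (∏ i ∈ Finset.range k, (a + 1 + (i : ℝ))) * Real.Gamma (a + 1) := by
    induction k with
    | zero => simp
    | succ k ih =>
      have h5 : (0 : ℝ) ≤ k := Nat.cast_nonneg k
      have h6 : a + k + 1 ≠ 0 := by linarith
      rw [Finset.prod_range_succ, show a + ((k + 1 : ℕ) : ℝ) + 1 = (a + k + 1) + 1 by push_cast; ring,
        Real.Gamma_add_one h6, ih]
      ring
  have h1 := (prod_pos ha k).ne'
  have h3 : (k.factorial : ℝ) ≠ 0 := by positivity
  have h4 : Real.Gamma (a + 1) ≠ 0 := (Real.Gamma_pos_of_pos (by linarith)).ne'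
  have e1 : (a : ℂ) + 1 = ((a + 1 : ℝ) : ℂ) := by push_cast; rfl
  have e2 : (a : ℂ) + k + 1 = ((a + k + 1 : ℝ) : ℂ) := by push_cast; rfl
  rw [e1, e2, Complex.Gamma_ofReal, Complex.Gamma_ofReal, hg]
  have : d a k * (z ^ 2) ^ k = (-1) ^ k * Real.Gamma (a + 1) /
      ((k.factorial : ℝ) * ((∏ i ∈ Finset.range k, (a + 1 + (i : ℝ))) * Real.Gamma (a + 1))) *
        (z / 2) ^ (2 * k) := by
    unfold d
    have e5 : (z / 2) ^ (2 * k) = (z ^ 2) ^ k / 4 ^ k := by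
      rw [pow_mul, ← div_pow]; congr 1; ring
    rw [e5, div_pow]
    field_simp
  rw [this]
  push_cast
  rfl

/-- Taylor expansion. -/
lemma G_taylor {a : ℝ} (ha : -1 < a) : ∃ C, 0 ≤ C ∧ ∀ y, 0 ≤ y → y ≤ 1 →
    |G a y - (1 - y / (4 * (a + 1)) + y ^ 2 / (32 * (a + 1) * (a + 2)))| ≤ C * y ^ 3 := by
  have h2 : 0 < a + 1 := by linarith
  have h3 : 0 < a + 2 := by linarith
  have sa : Summable fun k => |d a (k + 3)| := by
    have := summ_abs ha 1 zero_le_one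
    simp only [one_pow, mul_one] at this
    exact (summable_nat_add_iff 3).2 this
  refine ⟨∑' k, |d a (k + 3)|, tsum_nonneg fun _ => abs_nonneg _, fun y hy hy1 => ?_⟩
  have hs := summ ha y
  have e := hs.sum_add_tsum_nat_add 3
  have d1 : d a 1 = -1 / (4 * (a + 1)) := by simp [d]; field_simp
  have d2 : d a 2 = 1 / (32 * (a + 1) * (a + 2)) := by
    simp [d, Finset.prod_range_succ]
    rw [show a + 1 + 1 = a + 2 by ring]; field_simp; norm_num
  have e' : G a y - (1 - y / (4 * (a + 1)) + y ^ 2 / (32 * (a + 1) * (a + 2))) =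
      ∑' k, d a (k + 3) * y ^ (k + 3) := by
    unfold G
    rw [← e]
    simp only [Finset.sum_range_succ, Finset.sum_range_zero, d_zero, d1, d2]
    ring
  rw [e', ← Real.norm_eq_abs, ← tsum_mul_right]
  refine tsum_of_norm_bounded (sa.mul_right _).hasSum fun k => ?_
  rw [Real.norm_eq_abs, abs_mul, abs_pow, abs_of_nonneg hy]
  gcongr ?_ * ?_
  rw [pow_add]
  exact mul_le_of_le_one_left (by positivity) (pow_le_one₀ hy hy1)

end BesselAux

namespace BesselAux

/-- the real Bessel function -/
noncomputable def J (a z : ℝ) : ℝ := G a (z ^ 2)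

/-- its derivative -/
noncomputable def K (a z : ℝ) : ℝ := -z / (2 * (a + 1)) * G (a + 1) (z ^ 2)

/-- the energy -/
noncomputable def En (a z : ℝ) : ℝ := J a z ^ 2 + K a z ^ 2

lemma J_hasDerivAt {a : ℝ} (ha : -1 < a) (z : ℝ) : HasDerivAt (J a) (K a z) z := by
  have h2 : a + 1 ≠ 0 := by linarith
  have := (G_hasDerivAt ha (z ^ 2)).comp z (hasDerivAt_pow 2 z)
  refine this.congr_deriv ?_
  unfold K
  push_cast
  field_simp
  norm_num
  ring

lemma K_hasDerivAt {a : ℝ} (ha : -1 < a) {z : ℝ} (hz : z ≠ 0) :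
    HasDerivAt (K a) (-J a z - (2 * a + 1) / z * K a z) z := by
  have h2 : a + 1 ≠ 0 := by linarith
  have h3 : a + 2 ≠ 0 := by linarith
  have h3' : a + 1 + 1 ≠ 0 := by linarith
  have h := (G_hasDerivAt (a := a + 1) (by linarith) (z ^ 2)).comp z (hasDerivAt_pow 2 z)
  have h' := ((hasDerivAt_id z).neg.div_const (2 * (a + 1))).mul h
  refine h'.congr_deriv ?_
  unfold K J
  rw [G_rel ha]
  simp only [Function.comp, show a + 1 + 1 = a + 2 by ring]
  push_cast
  field_simp
  simp
  ring

lemma J_cont {a : ℝ} (ha : -1 < a) : Continuous (J a) :=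
  continuous_iff_continuousAt.2 fun z => (J_hasDerivAt ha z).continuousAt

lemma K_cont {a : ℝ} (ha : -1 < a) : Continuous (K a) := by
  have : Continuous (G (a + 1)) :=
    continuous_iff_continuousAt.2 fun z => (G_hasDerivAt (by linarith) z).continuousAt
  unfold K
  fun_prop

lemma En_cont {a : ℝ} (ha : -1 < a) : Continuous (En a) :=
  ((J_cont ha).pow 2).add ((K_cont ha).pow 2)

lemma J_zero (a : ℝ) : J a 0 = 1 := by simp [J, G_zero]
lemma K_zero (a : ℝ) : K a 0 = 0 := by simp [K]
lemma J_abs (a z : ℝ) : J a |z| = J a z := by simp [J]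
lemma En_nonneg (a z : ℝ) : 0 ≤ En a z := by unfold En; positivity

lemma En_hasDerivAt {a : ℝ} (ha : -1 < a) {z : ℝ} (hz : z ≠ 0) :
    HasDerivAt (En a) (-2 * (2 * a + 1) / z * K a z ^ 2) z := by
  refine (((J_hasDerivAt ha z).pow 2).add ((K_hasDerivAt ha hz).pow 2)).congr_deriv ?_
  push_cast
  field_simp
  ring

lemma J_le_one {a : ℝ} (ha : -1 / 2 ≤ a) (z : ℝ) : |J a z| ≤ 1 := by
  have ha' : -1 < a := by linarith
  have anti : AntitoneOn (En a) (Set.Ici 0) := by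
    refine antitoneOn_of_deriv_nonpos (convex_Ici 0) (En_cont ha').continuousOn ?_ ?_
    · intro x hx
      rw [interior_Ici] at hx
      exact (En_hasDerivAt ha' (ne_of_gt hx)).differentiableAt.differentiableWithinAt
    · intro x hx
      rw [interior_Ici] at hx
      rw [(En_hasDerivAt ha' (ne_of_gt hx)).deriv]
      have hx' : 0 < x := hx
      have : 0 ≤ (2 * (2 * a + 1) / x) * K a x ^ 2 := by
        have : 0 ≤ 2 * a + 1 := by linarith
        positivity
      calc _ = -((2 * (2 * a + 1) / x) * K a x ^ 2) := by ring
        _ ≤ 0 := by linarith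
  have h := anti (Set.mem_Ici.2 le_rfl) (Set.mem_Ici.2 (abs_nonneg z)) (abs_nonneg z)
  have h0 : En a 0 = 1 := by simp [En, J_zero, K_zero]
  rw [h0, En, J_abs] at h
  rw [← sq_le_one_iff_abs_le_one]
  nlinarith [sq_nonneg (K a |z|)]

lemma J_ge {a : ℝ} (ha : -1 / 2 ≤ a) (z : ℝ) : 0 ≤ J a z - 1 + z ^ 2 / (4 * (a + 1)) := by
  have ha' : -1 < a := by linarith
  have ha2 : 0 < a + 1 := by linarith
  have hd : ∀ x, HasDerivAt (fun z => J a z - 1 + z ^ 2 / (4 * (a + 1)))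
      (K a x + x / (2 * (a + 1))) x := fun x => by
    refine (((J_hasDerivAt ha' x).sub_const 1).add
      ((hasDerivAt_pow 2 x).div_const (4 * (a + 1)))).congr_deriv ?_
    push_cast
    field_simp
    ring
  have mono : MonotoneOn (fun z => J a z - 1 + z ^ 2 / (4 * (a + 1))) (Set.Ici 0) := by
    refine monotoneOn_of_deriv_nonneg (convex_Ici 0)
      (fun x _ => (hd x).continuousAt.continuousWithinAt)
      (fun x _ => (hd x).differentiableAt.differentiableWithinAt) ?_
    intro x hx
    rw [interior_Ici] at hx
    have hx' : 0 < x := hx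
    rw [(hd x).deriv]
    have h1 := (abs_le.1 (J_le_one (a := a + 1) (by linarith) x)).2
    have : K a x + x / (2 * (a + 1)) = x / (2 * (a + 1)) * (1 - J (a + 1) x) := by
      unfold K J; ring
    rw [this]
    exact mul_nonneg (by positivity) (by linarith)
  have h := mono (Set.mem_Ici.2 le_rfl) (Set.mem_Ici.2 (abs_nonneg z)) (abs_nonneg z)
  simpa [J_zero, J_abs] using h

lemma J_raise {a : ℝ} (ha : -1 < a) (z : ℝ) :
    ∫ s in (0 : ℝ)..1, J a (z * s) * s ^ (2 * a + 1) = J (a + 1) z / (2 * (a + 1)) := by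
  have h2 : 0 < a + 1 := by linarith
  have hc : ContinuousOn (fun s : ℝ => s ^ (2 * a + 2) * J (a + 1) (z * s) / (2 * (a + 1)))
      (Set.Icc 0 1) := by
    have h1 : Continuous fun s : ℝ => s ^ (2 * a + 2) :=
      Real.continuous_rpow_const (by linarith)
    have h3 := J_cont (a := a + 1) (by linarith)
    fun_prop
  have hi : IntervalIntegrable (fun s : ℝ => J a (z * s) * s ^ (2 * a + 1)) volume 0 1 := by
    apply IntervalIntegrable.continuousOn_mul
    · exact intervalIntegral.intervalIntegrable_rpow' (by linarith)
    · have := J_cont ha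
      fun_prop
  have := intervalIntegral.integral_eq_sub_of_hasDerivAt_of_le zero_le_one hc ?_ hi
  · rw [this]
    simp [Real.zero_rpow (by linarith : 2 * a + 2 ≠ 0)]
  · intro s hs
    have hs0 : 0 < s := hs.1
    have h1 := Real.hasDerivAt_rpow_const (x := s) (p := 2 * a + 2) (Or.inl hs0.ne')
    have h3 := (J_hasDerivAt (a := a + 1) (by linarith) (z * s)).comp s
      ((hasDerivAt_id s).const_mul z)
    refine ((h1.mul h3).div_const (2 * (a + 1))).congr_deriv ?_
    have e1 : s ^ (2 * a + 2) = s ^ (2 * a + 1) * s := by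
      rw [← Real.rpow_add_one hs0.ne']; congr 1; ring
    have h3' : a + 2 ≠ 0 := by linarith
    have e2 : J a (z * s) = J (a + 1) (z * s) + (z * s) / (2 * (a + 1)) * K (a + 1) (z * s) := by
      unfold J K
      rw [G_rel ha, show a + 1 + 1 = a + 2 by ring]
      field_simp
      ring
    rw [e1, e2, show 2 * a + 2 - 1 = 2 * a + 1 by ring]
    simp only [Function.comp]
    field_simp

section low
variable {a : ℝ}

lemma En_mono (ha : -1 < a) (ha' : a < -1 / 2) : MonotoneOn (En a) (Set.Ici 0) := by
  refine monotoneOn_of_deriv_nonneg (convex_Ici 0) (En_cont ha).continuousOn ?_ ?_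
  · intro x hx
    rw [interior_Ici] at hx
    exact (En_hasDerivAt ha (ne_of_gt hx)).differentiableAt.differentiableWithinAt
  · intro x hx
    rw [interior_Ici] at hx
    rw [(En_hasDerivAt ha (ne_of_gt hx)).deriv]
    have hx' : 0 < x := hx
    have : 0 ≤ -2 * (2 * a + 1) := by linarith
    positivity

lemma En_growth (ha : -1 < a) (ha' : a < -1 / 2) {s t : ℝ} (hs : 0 < s) (hst : s ≤ t) :
    En a t ≤ (t / s) ^ 2 * En a s := by
  have hd : ∀ x, 0 < x → HasDerivAt (fun x => En a x / x ^ 2)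
      ((-2 * (2 * a + 1) / x * K a x ^ 2 * x ^ 2 - En a x * (2 * x)) / (x ^ 2) ^ 2) x := fun x hx => by
    refine ((En_hasDerivAt ha hx.ne').div (hasDerivAt_pow 2 x) (by positivity)).congr_deriv ?_
    norm_num
  have anti : AntitoneOn (fun x => En a x / x ^ 2) (Set.Ioi 0) := by
    refine antitoneOn_of_deriv_nonpos (convex_Ioi 0)
      (fun x hx => (hd x hx).continuousAt.continuousWithinAt) ?_ ?_
    · intro x hx
      rw [interior_Ioi] at hx
      exact (hd x hx).differentiableAt.differentiableWithinAt
    · intro x hx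
      rw [interior_Ioi] at hx
      have hx' : 0 < x := hx
      rw [(hd x hx).deriv]
      apply div_nonpos_of_nonpos_of_nonneg _ (by positivity)
      have : -2 * (2 * a + 1) / x * K a x ^ 2 * x ^ 2 - En a x * (2 * x) =
        -(2 * x) * (J a x ^ 2 + (2 * a + 2) * K a x ^ 2) := by
        unfold En; field_simp; ring
      rw [this]
      have h0 : 0 ≤ J a x ^ 2 + (2 * a + 2) * K a x ^ 2 := by
        have : 0 ≤ 2 * a + 2 := by linarith
        positivity
      nlinarith
  have ht : 0 < t := by linarith
  have h := anti (Set.mem_Ioi.2 hs) (Set.mem_Ioi.2 ht) hst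
  simp only at h
  rw [div_le_iff₀ (by positivity)] at h
  calc _ ≤ _ := h
    _ = _ := by rw [div_pow]; ring

lemma lower (ha : -1 < a) (ha' : a < -1 / 2) {p q : ℝ} (hp : 0 < p) (hpq : p < q) :
    ∃ c > 0, ∃ x0 > 0, ∀ x ≥ x0, c * Real.sqrt (En a (p * x)) ≤ ∫ z in p..q, |J a (z * x)| := by
  set M := (q / p) ^ 2 with hM
  have hq : 0 < q := by linarith
  have hMpos : 0 < M := by positivity
  have hqp : 0 < q - p := by linarith
  refine ⟨(q - p) / (4 * (q / p)), by positivity,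
    2 * (M + (q - p) * M / (2 * p)) / (q - p), by positivity, fun x hx => ?_⟩
  have hx0 : 0 < x := lt_of_lt_of_le (by positivity) hx
  set A := p * x with hA
  set B := q * x with hB
  have hApos : 0 < A := by positivity
  have hAB : A ≤ B := by rw [hA, hB]; gcongr
  set e := En a A with he
  have he0 : 0 ≤ e := En_nonneg _ _
  have hBA : B / A = q / p := by rw [hA, hB]; field_simp
  have up : ∀ t ∈ Set.Icc A B, En a t ≤ M * e := fun t ht => by
    have h1 := En_mono ha ha' (Set.mem_Ici.2 (by linarith [ht.1] : (0:ℝ) ≤ t))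
      (Set.mem_Ici.2 (by linarith : (0:ℝ) ≤ B)) ht.2
    have h2 := En_growth ha ha' hApos hAB
    rw [hBA] at h2
    linarith
  have lo : ∀ t ∈ Set.Icc A B, e ≤ En a t := fun t ht =>
    En_mono ha ha' (Set.mem_Ici.2 hApos.le) (Set.mem_Ici.2 (by linarith [ht.1] : (0:ℝ) ≤ t)) ht.1
  have hJ := J_cont ha
  have hK := K_cont ha
  have hE := En_cont ha
  have JK : ∀ t, |J a t * K a t| ≤ En a t / 2 := fun t => by
    rw [abs_le]; unfold En
    constructor <;> nlinarith [sq_nonneg (J a t + K a t), sq_nonneg (J a t - K a t)]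
  -- derivative of J * K
  have hd : ∀ t ∈ Set.uIcc A B, HasDerivAt (fun t => J a t * K a t)
      (En a t - 2 * J a t ^ 2 - (2 * a + 1) / t * (J a t * K a t)) t := fun t ht => by
    rw [Set.uIcc_of_le hAB] at ht
    have : t ≠ 0 := by linarith [ht.1]
    refine ((J_hasDerivAt ha t).mul (K_hasDerivAt ha this)).congr_deriv ?_
    unfold En; ring
  have ci : ContinuousOn (fun t => En a t - 2 * J a t ^ 2 - (2 * a + 1) / t * (J a t * K a t))
      (Set.uIcc A B) := by
    rw [Set.uIcc_of_le hAB]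
    have : ContinuousOn (fun t : ℝ => (2 * a + 1) / t) (Set.Icc A B) :=
      continuousOn_const.div continuousOn_id fun t ht => by
        show t ≠ 0; linarith [ht.1]
    exact ((hE.sub (continuous_const.mul (hJ.pow 2))).continuousOn).sub
      (this.mul (hJ.mul hK).continuousOn)
  have ftc := intervalIntegral.integral_eq_sub_of_hasDerivAt hd ci.intervalIntegrable
  have lowb : ∫ t in A..B, (e - (M * e) / (2 * A) - 2 * (Real.sqrt (M * e) * |J a t|)) ≤
      ∫ t in A..B, (En a t - 2 * J a t ^ 2 - (2 * a + 1) / t * (J a t * K a t)) := by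
    apply intervalIntegral.integral_mono_on hAB
    · apply Continuous.intervalIntegrable; fun_prop
    · exact ci.intervalIntegrable
    · intro t ht
      have ht0 : 0 < t := by linarith [ht.1]
      have h1 : J a t ^ 2 ≤ Real.sqrt (M * e) * |J a t| := by
        have : |J a t| ≤ Real.sqrt (M * e) := by
          apply Real.abs_le_sqrt
          refine le_trans ?_ (up t ht)
          unfold En; nlinarith [sq_nonneg (K a t)]
        rw [← sq_abs, sq]
        gcongr
      have h2 : (2 * a + 1) / t * (J a t * K a t) ≤ (M * e) / (2 * A) := by
        calc (2 * a + 1) / t * (J a t * K a t) ≤ |(2 * a + 1) / t * (J a t * K a t)| := le_abs_self _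
          _ = |2 * a + 1| / t * |J a t * K a t| := by
            rw [abs_mul, abs_div, abs_of_pos ht0]
          _ ≤ 1 / A * (M * e / 2) := by
            have : |2 * a + 1| ≤ 1 := by rw [abs_le]; constructor <;> linarith
            have h5 := (JK t).trans (by linarith [up t ht] : En a t / 2 ≤ M * e / 2)
            have h6 := ht.1
            gcongr
          _ = _ := by field_simp
      linarith [lo t ht]
  rw [ftc, intervalIntegral.integral_sub (by simp) (by
    apply Continuous.intervalIntegrable; fun_prop), intervalIntegral.integral_const,
    intervalIntegral.integral_const_mul, intervalIntegral.integral_const_mul, smul_eq_mul] at lowb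
  have b1 := (abs_le.1 (JK B)).2.trans (by linarith [up B ⟨hAB, le_rfl⟩] : En a B / 2 ≤ M * e / 2)
  have b2 := (neg_le_neg ((by linarith [up A ⟨le_rfl, hAB⟩] : En a A / 2 ≤ M * e / 2))).trans
    (abs_le.1 (JK A)).1
  have sub : ∫ z in p..q, |J a (z * x)| = x⁻¹ * ∫ t in A..B, |J a t| := by
    rw [intervalIntegral.integral_comp_mul_right (fun t => |J a t|) hx0.ne', smul_eq_mul]
  rw [sub]
  set I := ∫ t in A..B, |J a t| with hI
  set S := Real.sqrt e with hS
  have hSS : S * S = e := Real.mul_self_sqrt he0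
  have hsqrt : Real.sqrt (M * e) = q / p * S := by
    rw [Real.sqrt_mul hMpos.le, hM, Real.sqrt_sq (by positivity)]
  rw [hsqrt] at lowb
  have hI0 : 0 ≤ I := intervalIntegral.integral_nonneg hAB fun t _ => abs_nonneg _
  -- x (q - p) e / 2 ≤ 2 (q/p) S I
  have hx2 : M + (q - p) * M / (2 * p) ≤ x * (q - p) / 2 := by
    rw [ge_iff_le, div_le_iff₀ hqp] at hx
    linarith
  have m : x * (q - p) / 2 * e ≤ 2 * (q / p * S * I) := by
    have h1 : (B - A) * (e - M * e / (2 * A)) = (x * (q - p) - (q - p) * M / (2 * p)) * e := by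
      rw [hA, hB]; field_simp
    have h2 := mul_le_mul_of_nonneg_right hx2 he0
    nlinarith
  rcases (Real.sqrt_nonneg e).eq_or_lt with h0 | h0
  · rw [hS, ← h0, mul_zero]; positivity
  · have m2 : x * (q - p) / 2 * S ≤ 2 * (q / p * I) := by
      have : (x * (q - p) / 2 * S) * S ≤ (2 * (q / p * I)) * S := by
        rw [mul_assoc, hSS]; linarith
      exact le_of_mul_le_mul_right this h0
    rw [inv_mul_eq_div, le_div_iff₀ hx0, div_mul_eq_mul_div, div_mul_eq_mul_div,
      div_le_iff₀ (by positivity)]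
    linarith

end low
end BesselAux

namespace BesselAux
open Filter Topology

lemma fatou {μ : Measure ℝ} {h : ℕ → ℝ → ℝ} {h0 : ℝ → ℝ} {L : ℝ}
    (hn : ∀ n x, 0 ≤ h n x) (hi : ∀ n, Integrable (h n) μ) (hm : Measurable h0)
    (hl : ∀ x, Tendsto (fun n => h n x) atTop (𝓝 (h0 x)))
    (hL : Tendsto (fun n => ∫ x, h n x ∂μ) atTop (𝓝 L)) :
    Integrable h0 μ ∧ ∫ x, h0 x ∂μ ≤ L := by
  have h0n : ∀ x, 0 ≤ h0 x := fun x => ge_of_tendsto' (hl x) fun n => hn n x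
  have hL0 : 0 ≤ L := ge_of_tendsto' hL fun n => integral_nonneg (hn n)
  have key : ∫⁻ x, ENNReal.ofReal (h0 x) ∂μ ≤ ENNReal.ofReal L := by
    have e1 : ∀ x, ENNReal.ofReal (h0 x) = liminf (fun n => ENNReal.ofReal (h n x)) atTop := fun x =>
      ((ENNReal.continuous_ofReal.tendsto _).comp (hl x)).liminf_eq.symm
    have e2 : ENNReal.ofReal L = liminf (fun n => ∫⁻ x, ENNReal.ofReal (h n x) ∂μ) atTop := by
      refine (Tendsto.liminf_eq ?_).symm
      refine ((ENNReal.continuous_ofReal.tendsto _).comp hL).congr fun n => ?_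
      exact ofReal_integral_eq_lintegral_ofReal (hi n) (Eventually.of_forall (hn n))
    simp_rw [e1]
    rw [e2]
    exact lintegral_liminf_le' fun n => (hi n).aestronglyMeasurable.aemeasurable.ennreal_ofReal
  have int : Integrable h0 μ := by
    refine ⟨hm.aestronglyMeasurable, ?_⟩
    rw [hasFiniteIntegral_iff_ofReal (Eventually.of_forall h0n)]
    exact lt_of_le_of_lt key ENNReal.ofReal_lt_top
  refine ⟨int, ?_⟩
  rw [← ENNReal.ofReal_le_ofReal_iff hL0,
    ofReal_integral_eq_lintegral_ofReal int (Eventually.of_forall h0n)]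
  exact key

/-- fourth order expansion at `0+` -/
def Expn (F : ℝ → ℝ) (A B : ℝ) : Prop :=
  ∃ C δ : ℝ, 0 < δ ∧ ∀ z, 0 < z → z < δ → |F z - (1 - A * z ^ 2 + B * z ^ 4)| ≤ C * z ^ 6

lemma Expn.lim {F : ℝ → ℝ} {A B : ℝ} (h : Expn F A B) {z : ℕ → ℝ} (hz0 : ∀ n, 0 < z n)
    (hz : Tendsto z atTop (𝓝 0)) :
    Tendsto (fun n => (1 - F (z n)) / z n ^ 2) atTop (𝓝 A) ∧
    Tendsto (fun n => (F (z n) - 1 + A * z n ^ 2) / z n ^ 4) atTop (𝓝 B) := by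
  obtain ⟨C, δ, hδ, hC⟩ := h
  have ev : ∀ᶠ n in atTop, z n < δ := hz.eventually (gt_mem_nhds hδ)
  have h2 : Tendsto (fun n => (F (z n) - 1 + A * z n ^ 2) / z n ^ 4) atTop (𝓝 B) := by
    rw [tendsto_iff_norm_sub_tendsto_zero]
    refine squeeze_zero' (g := fun n => C * z n ^ 2) (Eventually.of_forall fun n => norm_nonneg _) ?_ ?_
    · filter_upwards [ev] with n hn
      have hp := hz0 n
      have e : (F (z n) - 1 + A * z n ^ 2) / z n ^ 4 - B =
        (F (z n) - (1 - A * z n ^ 2 + B * z n ^ 4)) / z n ^ 4 := by field_simp; ring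
      rw [e, Real.norm_eq_abs, abs_div, abs_of_pos (by positivity : 0 < z n ^ 4),
        div_le_iff₀ (by positivity)]
      calc _ ≤ _ := hC _ hp hn
        _ = _ := by ring
    · have := (hz.pow 2).const_mul C
      simpa using this
  refine ⟨?_, h2⟩
  have h3 : Tendsto (fun n => A - (F (z n) - 1 + A * z n ^ 2) / z n ^ 4 * z n ^ 2) atTop
      (𝓝 (A - B * 0 ^ 2)) := tendsto_const_nhds.sub (h2.mul (hz.pow 2))
  have h4 : A - B * 0 ^ 2 = A := by ring
  rw [h4] at h3
  refine h3.congr fun n => ?_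
  have hp := hz0 n
  field_simp
  ring

lemma J_expn {a : ℝ} (ha : -1 < a) (x : ℝ) :
    Expn (fun z => J a (z * x)) (x ^ 2 / (4 * (a + 1))) (x ^ 4 / (32 * (a + 1) * (a + 2))) := by
  obtain ⟨C, _, hC⟩ := G_taylor ha
  refine ⟨C * x ^ 6, 1 / (|x| + 1), by positivity, fun z hz hz1 => ?_⟩
  rw [lt_div_iff₀ (by positivity)] at hz1
  have hx := abs_nonneg x
  have h1 : (z * x) ^ 2 ≤ 1 := by
    rw [← sq_abs, abs_mul, abs_of_pos hz]
    apply pow_le_one₀ (by positivity)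
    nlinarith
  have := hC ((z * x) ^ 2) (by positivity) h1
  unfold J
  calc _ = _ := by
        congr 1
        ring
    _ ≤ _ := this
    _ = _ := by ring

lemma stepM {g A B : ℝ} (hg : -1 / 2 ≤ g) {μ : Measure ℝ} [IsFiniteMeasure μ]
    (h1 : μ.real Set.univ = 1) {δ : ℝ} (hδ : 0 < δ)
    {F : ℝ → ℝ} (hF : ∀ z, 0 < z → z < δ → F z = ∫ x, J g (z * x) ∂μ) (hE : Expn F A B) :
    (4 * (g + 1) * A) ^ 2 ≤ 32 * (g + 1) * (g + 2) * B := by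
  have hg' : -1 < g := by linarith
  have hg1 : 0 < g + 1 := by linarith
  have hg2 : 0 < g + 2 := by linarith
  set z : ℕ → ℝ := fun n => δ / 2 * (1 / ((n : ℝ) + 1)) with hzdef
  have hz0 : ∀ n, 0 < z n := fun n => by simp only [hzdef]; positivity
  have hzδ : ∀ n, z n < δ := fun n => by
    have : 1 / ((n : ℝ) + 1) ≤ 1 := by
      rw [div_le_one (by positivity)]; linarith [(Nat.cast_nonneg n : (0 : ℝ) ≤ n)]
    simp only [hzdef]
    nlinarith
  have hz : Tendsto z atTop (𝓝 0) := by
    have := (tendsto_one_div_add_atTop_nhds_zero_nat (𝕜 := ℝ)).const_mul (δ / 2)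
    simpa [hzdef] using this
  have hJ := J_cont hg'
  have iJ : ∀ w : ℝ, Integrable (fun x => J g (w * x)) μ := fun w => by
    refine (integrable_const (1 : ℝ)).mono' (by fun_prop) (Eventually.of_forall fun x => ?_)
    exact J_le_one hg _
  have iS : ∀ w : ℝ, Integrable (fun x => J g (w * x) - 1) μ :=
    fun w => (iJ w).sub (integrable_const _)
  have hint1 : ∫ _x : ℝ, (1 : ℝ) ∂μ = 1 := by simp [h1]
  obtain ⟨l1, l2⟩ := hE.lim hz0 hz
  -- second moment
  obtain ⟨i2, m2⟩ := fatou (μ := μ) (h := fun n x => (1 - J g (z n * x)) / z n ^ 2)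
    (h0 := fun x => x ^ 2 / (4 * (g + 1))) (L := A)
    (fun n x => div_nonneg (by linarith [(abs_le.1 (J_le_one hg (z n * x))).2]) (by positivity))
    (fun n => ((integrable_const _).sub (iJ _)).div_const _) (by fun_prop)
    (fun x => ((J_expn hg' x).lim hz0 hz).1)
    (l1.congr fun n => by
      rw [integral_div, integral_sub (integrable_const _) (iJ _), hint1, hF _ (hz0 n) (hzδ n)])
  have pos : ∀ n, 0 ≤ F (z n) - 1 + z n ^ 2 * ∫ x, x ^ 2 / (4 * (g + 1)) ∂μ := fun n => by
    have e : F (z n) - 1 = ∫ x, (J g (z n * x) - 1) ∂μ := by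
      rw [integral_sub (iJ _) (integrable_const _), hint1, hF _ (hz0 n) (hzδ n)]
    rw [e, ← integral_const_mul, ← integral_add (iS _) (i2.const_mul _)]
    refine integral_nonneg fun x => ?_
    have := J_ge hg (z n * x)
    simp only [Pi.zero_apply]
    calc _ ≤ _ := this
      _ = _ := by ring
  have m2' : ∫ x, x ^ 2 / (4 * (g + 1)) ∂μ = A := by
    refine le_antisymm m2 (le_of_tendsto' l1 fun n => ?_)
    have hp := hz0 n
    rw [div_le_iff₀ (by positivity)]
    linarith [pos n]
  obtain ⟨i4, m4⟩ := fatou (μ := μ)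
    (h := fun n x => (J g (z n * x) - 1 + x ^ 2 / (4 * (g + 1)) * z n ^ 2) / z n ^ 4)
    (h0 := fun x => x ^ 4 / (32 * (g + 1) * (g + 2))) (L := B)
    (fun n x => div_nonneg (by
      have := J_ge hg (z n * x)
      calc _ ≤ _ := this
        _ = _ := by ring) (by positivity))
    (fun n => ((iS _).add (i2.mul_const _)).div_const _) (by fun_prop)
    (fun x => ((J_expn hg' x).lim hz0 hz).2)
    (l2.congr fun n => by
      rw [integral_div, integral_add (iS _) (i2.mul_const _),
        integral_sub (iJ _) (integrable_const _), hint1, hF _ (hz0 n) (hzδ n), integral_mul_const, m2'])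
  have j2 : Integrable (fun x : ℝ => x ^ 2) μ :=
    (i2.mul_const (4 * (g + 1))).congr (Eventually.of_forall fun x => by
      simp only; field_simp)
  have j4 : Integrable (fun x : ℝ => x ^ 4) μ :=
    (i4.mul_const (32 * (g + 1) * (g + 2))).congr (Eventually.of_forall fun x => by
      simp only; field_simp)
  rw [integral_div] at m2' m4
  have M2 : ∫ x, x ^ 2 ∂μ = 4 * (g + 1) * A := by rw [← m2']; field_simp
  have M4 : ∫ x, x ^ 4 ∂μ ≤ 32 * (g + 1) * (g + 2) * B := by
    rw [div_le_iff₀ (by positivity)] at m4; linarith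
  set m := 4 * (g + 1) * A with hm
  have cs : 0 ≤ ∫ x, (x ^ 4 - 2 * m * x ^ 2 + m ^ 2 * 1) ∂μ :=
    integral_nonneg fun x => by
      simp only [Pi.zero_apply]
      nlinarith [sq_nonneg (x ^ 2 - m)]
  have j42 : Integrable (fun x : ℝ => x ^ 4 - 2 * m * x ^ 2) μ := j4.sub (j2.const_mul _)
  rw [integral_add j42 ((integrable_const _).const_mul _),
    integral_sub j4 (j2.const_mul _), integral_const_mul, integral_const_mul, hint1, M2] at cs
  nlinarith

lemma dominate {a : ℝ} (ha : -1 < a) {μ : Measure ℝ} [IsFiniteMeasure μ] {r : ℝ} (hr : 0 < r)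
    (hi : ∀ z, 0 < z → z < r → Integrable (fun x => J a (z * x)) μ) :
    ∃ p > 0, ∃ g : ℝ → ℝ, Integrable g μ ∧ ∀ s, 0 ≤ s → s ≤ p → ∀ x, |J a (s * x)| ≤ g x := by
  rcases le_or_gt (-1 / 2) a with ha' | ha'
  · exact ⟨1, one_pos, fun _ => 1, integrable_const _, fun s _ _ x => J_le_one ha' _⟩
  have hJ := J_cont ha
  have hE := En_cont ha
  set h : ℝ → ENNReal := fun z => ∫⁻ x, ENNReal.ofReal |J a (z * x)| ∂μ with hh
  have hcl : ∀ N : ℕ, IsClosed {z | h z ≤ N} := fun N => by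
    apply IsSeqClosed.isClosed
    intro u z hu huz
    have e1 : ∀ x, ENNReal.ofReal |J a (z * x)| =
        liminf (fun n => ENNReal.ofReal |J a (u n * x)|) atTop := fun x => by
      refine (Tendsto.liminf_eq ?_).symm
      have : Continuous fun z => ENNReal.ofReal |J a (z * x)| :=
        ENNReal.continuous_ofReal.comp (by fun_prop)
      exact (this.tendsto z).comp huz
    show h z ≤ N
    simp only [hh]
    simp_rw [e1]
    refine (lintegral_liminf_le' fun n => ?_).trans ?_
    · exact (ENNReal.continuous_ofReal.comp (by fun_prop)).measurable.aemeasurable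
    · refine (liminf_le_liminf (Eventually.of_forall hu)).trans ?_
      simp
  have hfin : ∀ z, 0 < z → z < r → ∃ N : ℕ, h z ≤ N := fun z h0 h1 => by
    have h2 : h z < ⊤ := by
      have := (hi z h0 h1).abs.2
      rwa [hasFiniteIntegral_iff_ofReal (Eventually.of_forall fun _ => abs_nonneg _)] at this
    obtain ⟨N, hN⟩ := ENNReal.exists_nat_gt h2.ne
    exact ⟨N, hN.le⟩
  have hd : Dense (⋃ N : ℕ, interior ({z | h z ≤ N} ∪ (Set.Iic 0 ∪ Set.Ici r))) := by
    apply dense_iUnion_interior_of_closed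
    · exact fun N => (hcl N).union (isClosed_Iic.union isClosed_Ici)
    · rw [Set.eq_univ_iff_forall]
      intro z
      rw [Set.mem_iUnion]
      by_cases h0 : 0 < z
      · by_cases h1 : z < r
        · obtain ⟨N, hN⟩ := hfin z h0 h1
          exact ⟨N, Or.inl hN⟩
        · exact ⟨0, Or.inr (Or.inr (not_lt.1 h1))⟩
      · exact ⟨0, Or.inr (Or.inl (not_lt.1 h0))⟩
  obtain ⟨w, hw, hw'⟩ := hd.inter_open_nonempty (Set.Ioo 0 r) isOpen_Ioo ⟨r / 2, by linarith, by linarith⟩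
  obtain ⟨N, hN⟩ := Set.mem_iUnion.1 hw'
  have hnb : interior ({z | h z ≤ N} ∪ (Set.Iic 0 ∪ Set.Ici r)) ∩ Set.Ioo 0 r ∈ 𝓝 w :=
    (isOpen_interior.inter isOpen_Ioo).mem_nhds ⟨hN, hw⟩
  obtain ⟨ε, hε, hball⟩ := Metric.mem_nhds_iff.1 hnb
  set q := w + ε / 2 with hq
  have hpq : w < q := by linarith
  have hw0 : 0 < w := hw.1
  have hbd : ∀ z ∈ Set.Ioc w q, h z ≤ N := fun z hz => by
    have : z ∈ Metric.ball w ε := by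
      rw [Metric.mem_ball, Real.dist_eq, abs_lt]
      constructor <;> linarith [hz.1, hz.2]
    obtain ⟨h1, h2⟩ := hball this
    rcases interior_subset h1 with h3 | h3 | h3
    · exact h3
    · exact absurd h2.1 (not_lt.2 h3)
    · exact absurd h2.2 (not_lt.2 h3)
  obtain ⟨c, hc, x0, hx0, hlow⟩ := lower ha ha' hw0 hpq
  set Φ : ℝ → ℝ := fun x => ∫ z in w..q, |J a (z * x)| with hΦ
  have hΦm : Continuous Φ := by
    apply intervalIntegral.continuous_parametric_intervalIntegral_of_continuous'
    fun_prop
  have hΦ0 : ∀ x, 0 ≤ Φ x := fun x => intervalIntegral.integral_nonneg hpq.le fun _ _ => abs_nonneg _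
  have hΦi : Integrable Φ μ := by
    refine ⟨hΦm.aestronglyMeasurable, ?_⟩
    rw [hasFiniteIntegral_iff_ofReal (Eventually.of_forall hΦ0)]
    have e1 : ∀ x, ENNReal.ofReal (Φ x) = ∫⁻ z in Set.Ioc w q, ENNReal.ofReal |J a (z * x)| := fun x => by
      simp only [hΦ]
      rw [intervalIntegral.integral_of_le hpq.le, ofReal_integral_eq_lintegral_ofReal]
      · have : Continuous fun z => |J a (z * x)| := by fun_prop
        exact (this.intervalIntegrable w q).1
      · exact Eventually.of_forall fun _ => abs_nonneg _
    simp_rw [e1]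
    rw [lintegral_lintegral_swap]
    · calc _ ≤ ∫⁻ z in Set.Ioc w q, (N : ENNReal) := setLIntegral_mono' measurableSet_Ioc hbd
        _ < ⊤ := by
          rw [setLIntegral_const, Real.volume_Ioc]
          exact ENNReal.mul_lt_top (ENNReal.natCast_lt_top N) ENNReal.ofReal_lt_top
    · exact (ENNReal.continuous_ofReal.comp (by fun_prop : Continuous fun y : ℝ × ℝ =>
        |J a (y.2 * y.1)|)).measurable.aemeasurable
  have hΦe : ∀ x, Φ |x| = Φ x := fun x => by
    simp only [hΦ]
    refine intervalIntegral.integral_congr fun z hz => ?_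
    show |J a (z * |x|)| = |J a (z * x)|
    rw [← J_abs a (z * |x|), ← J_abs a (z * x), abs_mul, abs_mul, abs_abs]
  refine ⟨w, hw0, fun x => Real.sqrt (En a (w * x0)) + c⁻¹ * Φ x,
    (integrable_const _).add (hΦi.const_mul _), fun s hs0 hs x => ?_⟩
  have b1 : |J a (s * x)| ≤ Real.sqrt (En a (w * |x|)) := by
    apply Real.abs_le_sqrt
    rw [← J_abs, abs_mul, abs_of_nonneg hs0]
    have hx := abs_nonneg x
    have := En_mono ha ha' (Set.mem_Ici.2 (by positivity : 0 ≤ s * |x|))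
      (Set.mem_Ici.2 (by positivity : 0 ≤ w * |x|)) (by gcongr)
    refine le_trans ?_ this
    unfold En
    nlinarith [sq_nonneg (K a (s * |x|))]
  refine b1.trans ?_
  rcases le_total x0 |x| with h1 | h1
  · have := hlow |x| h1
    have h2 : Real.sqrt (En a (w * |x|)) ≤ c⁻¹ * Φ x := by
      rw [inv_mul_eq_div, le_div_iff₀ hc, ← hΦe]
      linarith
    linarith [Real.sqrt_nonneg (En a (w * x0))]
  · have hx := abs_nonneg x
    have h2 : Real.sqrt (En a (w * |x|)) ≤ Real.sqrt (En a (w * x0)) :=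
      Real.sqrt_le_sqrt (En_mono ha ha' (Set.mem_Ici.2 (by positivity))
        (Set.mem_Ici.2 (by positivity)) (by gcongr))
    have h3 : 0 ≤ c⁻¹ * Φ x := mul_nonneg (by positivity) (hΦ0 x)
    linarith

/-- averaging -/
noncomputable def Av (a b z : ℝ) : ℝ :=
  2 * (a + 1) * ∫ s in (0 : ℝ)..1, J b (z * s) * s ^ (2 * a + 1)

lemma Av_expn {a b : ℝ} (ha : -1 < a) (hb : -1 < b) :
    Expn (Av a b) ((a + 1) / (4 * (b + 1) * (a + 2)))
      ((a + 1) / (32 * (b + 1) * (b + 2) * (a + 3))) := by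
  have ha1 : 0 < a + 1 := by linarith
  have ha2 : 0 < a + 2 := by linarith
  have ha3 : 0 < a + 3 := by linarith
  have hb1 : 0 < b + 1 := by linarith
  have hb2 : 0 < b + 2 := by linarith
  obtain ⟨C, hC0, hC⟩ := G_taylor hb
  refine ⟨C, 1, one_pos, fun z hz hz1 => ?_⟩
  have hJ := J_cont hb
  have ii : ∀ f : ℝ → ℝ, Continuous f →
      IntervalIntegrable (fun s : ℝ => f s * s ^ (2 * a + 1)) volume 0 1 := fun f hf =>
    IntervalIntegrable.continuousOn_mul
      (intervalIntegral.intervalIntegrable_rpow' (by linarith)) hf.continuousOn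
  have pw : ∀ k : ℕ, ∫ s in (0 : ℝ)..1, s ^ k * s ^ (2 * a + 1) = 1 / (2 * a + 2 + k) := fun k => by
    have hk : (0 : ℝ) ≤ k := Nat.cast_nonneg k
    have : ∀ s ∈ Set.uIoc (0 : ℝ) 1, s ^ k * s ^ (2 * a + 1) = s ^ (2 * a + 1 + k) := fun s hs => by
      rw [Set.uIoc_of_le zero_le_one] at hs
      rw [Real.rpow_add_natCast hs.1.ne', mul_comm]
    rw [intervalIntegral.integral_congr_ae (Eventually.of_forall this),
      integral_rpow (Or.inl (by linarith)), Real.one_rpow, Real.zero_rpow (by linarith)]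
    rw [show 2 * a + 1 + k + 1 = 2 * a + 2 + k by ring]; simp
  have poly : 2 * (a + 1) * ∫ s in (0 : ℝ)..1,
      (1 - (z * s) ^ 2 / (4 * (b + 1)) + ((z * s) ^ 2) ^ 2 / (32 * (b + 1) * (b + 2))) * s ^ (2 * a + 1) =
      1 - ((a + 1) / (4 * (b + 1) * (a + 2))) * z ^ 2 +
        ((a + 1) / (32 * (b + 1) * (b + 2) * (a + 3))) * z ^ 4 := by
    have e : ∀ s : ℝ, (1 - (z * s) ^ 2 / (4 * (b + 1)) +
        ((z * s) ^ 2) ^ 2 / (32 * (b + 1) * (b + 2))) * s ^ (2 * a + 1) =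
        (s ^ 0 * s ^ (2 * a + 1) - z ^ 2 / (4 * (b + 1)) * (s ^ 2 * s ^ (2 * a + 1))) +
          z ^ 4 / (32 * (b + 1) * (b + 2)) * (s ^ 4 * s ^ (2 * a + 1)) := fun s => by ring
    simp_rw [e]
    have p0 := ii (fun s => s ^ 0) (by fun_prop)
    have p2 := ii (fun s => s ^ 2) (by fun_prop)
    have p4 := ii (fun s => s ^ 4) (by fun_prop)
    rw [intervalIntegral.integral_add (p0.sub (p2.const_mul _)) (p4.const_mul _),
      intervalIntegral.integral_sub p0 (p2.const_mul _),
      intervalIntegral.integral_const_mul, intervalIntegral.integral_const_mul, pw, pw, pw]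
    have h1 : 2 * a + 2 ≠ 0 := by linarith
    have h2 : 2 * a + 2 + 2 ≠ 0 := by linarith
    have h3 : 2 * a + 2 + 4 ≠ 0 := by linarith
    push_cast
    rw [add_zero, show 2 * a + 2 = 2 * (a + 1) by ring, show 2 * (a + 1) + 2 = 2 * (a + 2) by ring,
      show 2 * (a + 1) + 4 = 2 * (a + 3) by ring]
    field_simp
  rw [← poly, Av, ← mul_sub, ← intervalIntegral.integral_sub (ii _ (by fun_prop)) (ii _ (by fun_prop)),
    abs_mul, abs_of_pos (by positivity : 0 < 2 * (a + 1)), ← Real.norm_eq_abs]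
  have bd : ‖∫ s in (0 : ℝ)..1, (J b (z * s) * s ^ (2 * a + 1) -
      (1 - (z * s) ^ 2 / (4 * (b + 1)) + ((z * s) ^ 2) ^ 2 / (32 * (b + 1) * (b + 2))) *
        s ^ (2 * a + 1))‖ ≤ ∫ s in (0 : ℝ)..1, C * z ^ 6 * (s ^ 0 * s ^ (2 * a + 1)) := by
    refine intervalIntegral.norm_integral_le_of_norm_le zero_le_one (Eventually.of_forall fun s hs => ?_)
      ((ii (fun s => s ^ 0) (by fun_prop)).const_mul _)
    have hs0 := hs.1
    have hs1 := hs.2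
    have hzs : z * s ≤ 1 := by nlinarith
    have hr : 0 < s ^ (2 * a + 1) := Real.rpow_pos_of_pos hs0 _
    rw [← sub_mul, norm_mul, Real.norm_eq_abs, Real.norm_eq_abs, abs_of_pos hr, ← mul_assoc]
    refine mul_le_mul_of_nonneg_right ?_ hr.le
    have := hC ((z * s) ^ 2) (by positivity) (pow_le_one₀ (by positivity) hzs)
    refine (this : _).trans ?_
    have h6 : s ^ 6 ≤ 1 := pow_le_one₀ hs0.le hs1
    calc C * ((z * s) ^ 2) ^ 3 = C * z ^ 6 * s ^ 6 := by ring
      _ ≤ C * z ^ 6 * 1 := by gcongr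
      _ = _ := by ring
  rw [intervalIntegral.integral_const_mul, pw] at bd
  calc _ ≤ 2 * (a + 1) * (C * z ^ 6 * (1 / (2 * a + 2 + (0 : ℕ)))) := by gcongr
    _ = _ := by
      push_cast
      rw [add_zero, show 2 * a + 2 = 2 * (a + 1) by ring]; field_simp

lemma Av_eq {a b : ℝ} (ha : -1 < a) {μ : Measure ℝ} [IsFiniteMeasure μ] {p : ℝ}
    {g : ℝ → ℝ} (hg : Integrable g μ)
    (hdom : ∀ s, 0 ≤ s → s ≤ p → ∀ x, |J a (s * x)| ≤ g x)
    (hf : ∀ z, J b z = ∫ x, J a (z * x) ∂μ) (z : ℝ) (hz0 : 0 < z) (hz : z < p) :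
    Av a b z = ∫ x, J (a + 1) (z * x) ∂μ := by
  have ha1 : 0 < a + 1 := by linarith
  have hJ := J_cont ha
  have e1 : ∀ x, J (a + 1) (z * x) = 2 * (a + 1) *
      ∫ s in Set.Ioc (0 : ℝ) 1, J a (z * s * x) * s ^ (2 * a + 1) := fun x => by
    have := J_raise ha (z * x)
    rw [intervalIntegral.integral_of_le zero_le_one] at this
    have h2 : ∀ s : ℝ, z * s * x = z * x * s := fun s => by ring
    simp_rw [h2]
    rw [this]; field_simp
  simp_rw [e1]
  rw [integral_const_mul, Av, intervalIntegral.integral_of_le zero_le_one]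
  congr 1
  simp_rw [hf, ← integral_mul_const]
  refine integral_integral_swap ?_
  have hs : Integrable (fun s : ℝ => s ^ (2 * a + 1)) (volume.restrict (Set.Ioc (0 : ℝ) 1)) :=
    (intervalIntegral.intervalIntegrable_rpow' (by linarith : -1 < 2 * a + 1)).1
  have hprod := hs.mul_prod hg
  refine hprod.mono' ?_ ?_
  · apply Measurable.aestronglyMeasurable
    have : Continuous fun y : ℝ × ℝ => J a (z * y.1 * y.2) := by fun_prop
    exact this.measurable.mul (measurable_fst.pow_const _)
  · have hae : ∀ᵐ y : ℝ × ℝ ∂((volume.restrict (Set.Ioc (0 : ℝ) 1)).prod μ), y.1 ∈ Set.Ioc (0 : ℝ) 1 :=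
      Measure.quasiMeasurePreserving_fst.ae (ae_restrict_mem measurableSet_Ioc)
    filter_upwards [hae] with y hy
    have hr : 0 < y.1 ^ (2 * a + 1) := Real.rpow_pos_of_pos hy.1 _
    simp only [Function.uncurry]
    rw [norm_mul, Real.norm_eq_abs, Real.norm_eq_abs, abs_of_pos hr, mul_comm]
    have h1 := hy.1
    have h2 := hy.2
    refine mul_le_mul_of_nonneg_left (hdom _ (by positivity) ?_ _) hr.le
    nlinarith

end BesselAux
open BesselAux in
/-- For `α > -1`, `β < 0` with `α + β > -1`, there is no finite positive Borel measure `μ`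
on `[0,∞)` with `j_{α+β}(z) = ∫₀^∞ j_α(zx) dμ(x)` for all real `z`. -/
theorem stmt_3 (α β : ℝ) (hα : α > -1) (hβ : β < 0) (hαβ : α + β > -1) :
    ¬ ∃ μ : Measure ℝ, IsFiniteMeasure μ ∧ μ (Set.Iio 0) = 0 ∧
      ∀ z : ℝ, jBessel ((α + β : ℝ) : ℂ) (z : ℂ) = ∫ x, jBessel (α : ℂ) ((z * x : ℝ) : ℂ) ∂μ := by
  rintro ⟨μ, hfin, -, hμ⟩
  set b := α + β with hb
  have hb1 : -1 < b := hαβ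
  have ha1 : -1 < α := hα
  have hf : ∀ z, J b z = ∫ x, J α (z * x) ∂μ := fun z => by
    have h := hμ z
    simp_rw [jBessel_eq ha1, jBessel_eq hb1] at h
    have h2 : ∫ x, ((G α ((z * x) ^ 2) : ℝ) : ℂ) ∂μ = ((∫ x, G α ((z * x) ^ 2) ∂μ : ℝ) : ℂ) :=
      integral_ofReal
    rw [h2] at h
    exact Complex.ofReal_injective h
  have hmass : μ.real Set.univ = 1 := by
    have := hf 0
    simp [J_zero] at this
    exact this.symm
  have hne : ∃ r > 0, ∀ z, 0 < z → z < r → J b z ≠ 0 := by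
    have h := (J_cont hb1).continuousAt (x := 0)
    have h2 := h.eventually_ne (y := 0) (by rw [J_zero]; exact one_ne_zero)
    obtain ⟨r, hr, hball⟩ := Metric.eventually_nhds_iff.1 h2
    refine ⟨r, hr, fun z h0 h1 => hball ?_⟩
    rw [Real.dist_eq, sub_zero, abs_of_pos h0]
    exact h1
  obtain ⟨r, hr, hne⟩ := hne
  have hi : ∀ z, 0 < z → z < r → Integrable (fun x => J α (z * x)) μ := fun z h0 h1 => by
    by_contra hcon
    exact hne z h0 h1 ((hf z).trans (integral_undef hcon))
  obtain ⟨p, hp, g, hg, hdom⟩ := dominate ha1 hr hi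
  have key := stepM (g := α + 1) (by linarith) hmass hp
    (fun z h0 h1 => Av_eq ha1 hg hdom hf z h0 h1) (Av_expn ha1 hb1)
  have A1 : 0 < α + 1 := by linarith
  have A2 : 0 < α + 2 := by linarith
  have A3 : 0 < α + 3 := by linarith
  have B1 : 0 < b + 1 := by linarith
  have B2 : 0 < b + 2 := by linarith
  have e1 : 4 * (α + 1 + 1) * ((α + 1) / (4 * (b + 1) * (α + 2))) = (α + 1) / (b + 1) := by
    rw [show α + 1 + 1 = α + 2 by ring]; field_simp
  have e2 : 32 * (α + 1 + 1) * (α + 1 + 2) * ((α + 1) / (32 * (b + 1) * (b + 2) * (α + 3))) =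
      (α + 1) * (α + 2) / ((b + 1) * (b + 2)) := by
    rw [show α + 1 + 1 = α + 2 by ring, show α + 1 + 2 = α + 3 by ring]; field_simp
  rw [e1, e2, div_pow, div_le_div_iff₀ (by positivity) (by positivity)] at key
  have key2 : (α + 1) * (b + 2) ≤ (α + 2) * (b + 1) := by
    have : ((α + 1) * (b + 1)) * ((α + 1) * (b + 2)) ≤ ((α + 1) * (b + 1)) * ((α + 2) * (b + 1)) := by
      linarith
    exact le_of_mul_le_mul_left this (by positivity)
  nlinarith
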